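/- Let q ≥ 2, n ≥ 1 and d ≤ n be integers, and let C ⊆ (Fin q)^n be a code of cardinality M with minimum Hamming distance at least d. For u, v ∈ (Fin q)^n write g(u,v) := n − d_H(u,v); for a symbol α and coordinate j let c_{α,j} be the number of words of C whose j-th coordinate equals α; and set m := ⌈M/q⌉ and r := qm − M. Then C(M,2)·(n−d) ≥ Σ_{{u,v}⊆C, u≠v} g(u,v) = Σ_{j=1}^{n} Σ_{α∈Fin q} C(c_{α,j},2) ≥ n·((q−r)·C(m,2) + r·C(m−1,2)). Moreover, the number of unordered pairs {u,v} ⊆ C with u ≠ v and d_H(u,v) ≠ d is at most C(M,2)·(n−d) − n·((q−r)·C(m,2) + r·C(m−1,2)). -/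

import Mathlib

open Finset

/-- `g(u,v) = n - d_H(u,v)`, lifted to unordered pairs of words. -/
def gSym2 (q n : ℕ) : Sym2 (Fin n → Fin q) → ℕ :=
  Sym2.lift ⟨fun u v => n - hammingDist u v, fun u v => by simp only [hammingDist_comm u v]⟩

/-- The Hamming distance, lifted to unordered pairs of words. -/
def distSym2 (q n : ℕ) : Sym2 (Fin n → Fin q) → ℕ :=
  Sym2.lift ⟨fun u v => hammingDist u v, fun u v => hammingDist_comm u v⟩

lemma aux_tangent (k c : ℕ) : Nat.choose k 2 + k * c ≤ Nat.choose c 2 + k * k := by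
  have e : ∀ a : ℕ, (Nat.choose a 2 : ℤ) * 2 = a * (a - 1) := by
    intro a
    induction a with
    | zero => simp
    | succ a ih =>
      rw [Nat.choose_succ_succ' a 1]
      push_cast
      simp only [Nat.choose_one_right]
      linarith
  have h1 := e k
  have h2 := e c
  have h3 : (0 : ℤ) ≤ ((c : ℤ) - k) * (c - k - 1) := by
    rcases le_or_gt (c : ℤ) k with h | h
    · nlinarith
    · exact mul_nonneg (by linarith) (by linarith)
  zify
  nlinarith

lemma aux_bal (q M m r : ℕ) (hq : 2 ≤ q) (hm : m = (M + q - 1) / q) (hr : r = q * m - M)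
    (c : Fin q → ℕ) (hc : ∑ a, c a = M) :
    (q - r) * Nat.choose m 2 + r * Nat.choose (m - 1) 2 ≤ ∑ a, Nat.choose (c a) 2 := by
  rcases Nat.eq_zero_or_pos m with h0 | hpos
  · subst h0
    simp
  obtain ⟨k, rfl⟩ : ∃ k, m = k + 1 := ⟨m - 1, by omega⟩
  have h1 : (k + 1) * q ≤ M + q - 1 := by
    rw [hm]; exact Nat.div_mul_le_self _ _
  have h2 : M + q - 1 < (k + 1 + 1) * q := by
    have := Nat.lt_div_mul_add (a := M + q - 1) (b := q) (by omega)
    rw [← hm] at this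
    linarith
  have h3 : M ≤ q * (k + 1) := by nlinarith [Nat.sub_add_cancel (show 1 ≤ M + q by omega)]
  have h4 : r + M = q * (k + 1) := by omega
  have h5 : r ≤ q := by nlinarith [Nat.sub_add_cancel (show 1 ≤ M + q by omega)]
  obtain ⟨s, rfl⟩ := Nat.exists_eq_add_of_le h5
  have hs : ∑ a, (Nat.choose k 2 + k * c a) ≤ ∑ a, (Nat.choose (c a) 2 + k * k) :=
    Finset.sum_le_sum fun a _ => aux_tangent k (c a)
  rw [Finset.sum_add_distrib, Finset.sum_add_distrib, ← Finset.mul_sum, hc] at hs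
  simp only [Finset.sum_const, Finset.card_univ, Fintype.card_fin, smul_eq_mul] at hs
  rw [Nat.choose_succ_succ' k 1, Nat.choose_one_right, Nat.add_sub_cancel_left, Nat.add_sub_cancel]
  have h6 : M = (r + s) * k + s := by nlinarith
  rw [h6] at hs
  nlinarith

lemma aux_card {α : Type*} [DecidableEq α] (C : Finset α) :
    (C.sym2.filter (fun z => ¬ z.IsDiag)).card = Nat.choose C.card 2 := by
  rw [← Sym2.card_image_offDiag]
  congr 1
  ext z
  induction z with
  | _ a b =>
    simp only [mem_filter, mk_mem_sym2_iff, Sym2.mk_isDiag_iff, mem_image, mem_offDiag]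
    constructor
    · rintro ⟨⟨ha, hb⟩, h⟩
      exact ⟨(a, b), ⟨ha, hb, h⟩, rfl⟩
    · rintro ⟨⟨x, y⟩, ⟨hx, hy, h⟩, e⟩
      rcases Sym2.eq_iff.1 e with ⟨rfl, rfl⟩ | ⟨rfl, rfl⟩
      · exact ⟨⟨hx, hy⟩, h⟩
      · exact ⟨⟨hy, hx⟩, fun h' => h h'.symm⟩

lemma aux_g (q n : ℕ) (u v : Fin n → Fin q) :
    n - hammingDist u v = ∑ j : Fin n, if u j = v j then 1 else 0 := by
  have h := Finset.card_filter_add_card_filter_not (s := (univ : Finset (Fin n)))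
    (fun j => u j = v j)
  rw [Finset.card_univ, Fintype.card_fin] at h
  rw [← Finset.card_filter]
  unfold hammingDist
  simp only [ne_eq]
  omega

lemma aux_sum (q n : ℕ) (C : Finset (Fin n → Fin q)) :
    ∑ z ∈ C.sym2.filter (fun z => ¬ z.IsDiag), gSym2 q n z
        = ∑ j : Fin n, ∑ α : Fin q, Nat.choose (C.filter (fun w => w j = α)).card 2 := by
  have h : ∀ z ∈ C.sym2.filter (fun z => ¬ z.IsDiag), gSym2 q n z =
      ∑ j : Fin n, ∑ α : Fin q,
        if z ∈ (C.filter (fun w => w j = α)).sym2 then 1 else 0 := by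
    intro z hz
    induction z with
    | _ u v =>
      simp only [mem_filter, mk_mem_sym2_iff] at hz
      change n - hammingDist u v = _
      rw [aux_g]
      refine Finset.sum_congr rfl fun j _ => ?_
      simp only [mk_mem_sym2_iff, mem_filter, hz.1.1, hz.1.2, true_and]
      simp only [ite_and, Finset.sum_ite_eq, mem_univ, if_true]
      simp only [eq_comm]
  rw [Finset.sum_congr rfl h, Finset.sum_comm]
  refine Finset.sum_congr rfl fun j _ => ?_
  rw [Finset.sum_comm]
  refine Finset.sum_congr rfl fun a _ => ?_
  rw [← Finset.card_filter, ← aux_card]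
  congr 1
  ext z
  induction z with
  | _ u v =>
    simp only [mem_filter, mk_mem_sym2_iff]
    tauto

/-- The counting proposition (Proposition 4.1 in the thesis): for a code `C ⊆ (Fin q)^n`
of cardinality `M` with minimum Hamming distance at least `d`, writing
`g(u,v) := n - d_H(u,v)`, `c_{α,j}` for the number of words of `C` with `α` in
coordinate `j`, `m := ⌈M/q⌉` and `r := qm - M`, we have
`C(M,2)(n-d) ≥ Σ_{{u,v}⊆C, u≠v} g(u,v) = Σ_j Σ_α C(c_{α,j},2) ≥ n((q-r)C(m,2) + rC(m-1,2))`,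
and the number of unordered pairs `{u,v} ⊆ C`, `u ≠ v`, with `d_H(u,v) ≠ d` is at most
the leftmost term minus the rightmost term. -/
theorem counting_proposition (q n d : ℕ) (hq : 2 ≤ q) (hn : 0 < n) (hd : 0 < d) (hdn : d ≤ n)
    (C : Finset (Fin n → Fin q)) (M : ℕ) (hM : C.card = M)
    (hC : ∀ u ∈ C, ∀ v ∈ C, u ≠ v → d ≤ hammingDist u v)
    (m r : ℕ) (hm : m = (M + q - 1) / q) (hr : r = q * m - M) :
    (Nat.choose M 2 * (n - d) ≥
        ∑ z ∈ C.sym2.filter (fun z => ¬ z.IsDiag), gSym2 q n z)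
    ∧ (∑ z ∈ C.sym2.filter (fun z => ¬ z.IsDiag), gSym2 q n z
        = ∑ j : Fin n, ∑ α : Fin q, Nat.choose (C.filter (fun w => w j = α)).card 2)
    ∧ (∑ z ∈ C.sym2.filter (fun z => ¬ z.IsDiag), gSym2 q n z
        ≥ n * ((q - r) * Nat.choose m 2 + r * Nat.choose (m - 1) 2))
    ∧ ((C.sym2.filter (fun z => ¬ z.IsDiag ∧ distSym2 q n z ≠ d)).card
        ≤ Nat.choose M 2 * (n - d)
          - n * ((q - r) * Nat.choose m 2 + r * Nat.choose (m - 1) 2)) := by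
  have hS := aux_sum q n C
  have hcard := aux_card C
  rw [hM] at hcard
  have h3 : n * ((q - r) * Nat.choose m 2 + r * Nat.choose (m - 1) 2) ≤
      ∑ z ∈ C.sym2.filter (fun z => ¬ z.IsDiag), gSym2 q n z := by
    rw [hS]
    have : ∑ _j : Fin n, ((q - r) * Nat.choose m 2 + r * Nat.choose (m - 1) 2) ≤
        ∑ j : Fin n, ∑ α : Fin q, Nat.choose (C.filter (fun w => w j = α)).card 2 := by
      refine Finset.sum_le_sum fun j _ => aux_bal q M m r hq hm hr _ ?_
      rw [← hM]
      exact (Finset.card_eq_sum_card_fiberwise (fun _ _ => by simp)).symm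
    simpa using this
  have h4 : (C.sym2.filter (fun z => ¬ z.IsDiag ∧ distSym2 q n z ≠ d)).card +
      ∑ z ∈ C.sym2.filter (fun z => ¬ z.IsDiag), gSym2 q n z ≤ Nat.choose M 2 * (n - d) := by
    rw [← hcard, ← Finset.filter_filter, Finset.card_filter, ← Finset.sum_add_distrib,
      ← smul_eq_mul]
    refine Finset.sum_le_card_nsmul _ _ _ fun z hz => ?_
    induction z with
    | _ u v =>
      simp only [mem_filter, mk_mem_sym2_iff, Sym2.mk_isDiag_iff] at hz
      have h1 := hC u hz.1.1 v hz.1.2 hz.2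
      have h2 : hammingDist u v ≤ n := by
        simpa using hammingDist_le_card_fintype (x := u) (y := v)
      change (if hammingDist u v ≠ d then 1 else 0) + (n - hammingDist u v) ≤ n - d
      split_ifs <;> omega
  exact ⟨by omega, hS, h3, by omega⟩
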